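/- Suppose γRT∞ < m u∞² < γRT∞ + 1. (i) If φ_b ≠ 0, then the planar stationary problem admits no solution (ñ, ũ, T̃, φ̃). (ii) If φ_b = 0, then any solution (ñ, ũ, T̃, φ̃) of the planar stationary problem is the constant state: ñ(x₁) = 1, ũ(x₁) = u∞, T̃(x₁) = T∞ and φ̃(x₁) = 0 for all x₁ ≥ 0. -/

import Mathlib

/-!
Mass conservation and the adiabatic law express `u` and `T` through the density `n`, so the fluid is
barotropic: its momentum flux is a function `P n`, and the momentum balance `n φ' = P'(n) n'`
integrates to `φ = H n`, where `H' s = P' s / s` and `H 1 = 0`. The Poisson equation then has the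
first integral `φ'² / 2 = F n - F 1` with `F = P + exp (-H)`. Since `F' 1 = 0` and
`F'' 1 = P'(1) (1 + P'(1))`, the velocity range, which says `-1 < P'(1) < 0`, makes `1` a strict
local maximum of `F`. But `F n ≥ F 1`, so no value of `n` other than `1` lies close to `1`; as
`n → 1` and the range of `n` is connected, `n` is identically `1`.
-/

/-- The planar stationary (sheath) problem for the full Euler–Poisson system on the
half line `[0,∞)`: `ñ, ũ, T̃, φ̃` are continuous on `[0,∞)`, with
`ñ, ũ, T̃, φ̃, φ̃'` continuously differentiable on `(0,∞)`, satisfying the stationary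
equations `(ñũ)' = 0`, `m ñũũ' + (RT̃ñ)' = ñφ̃'`, `ũT̃' + (γ−1)T̃ũ' = 0`,
`φ̃'' = ñ − e^{−φ̃}`, with `inf ñ > 0`, `inf T̃ > 0`, far-field values
`(1, u∞, T∞, 0)` and boundary condition `φ̃(0) = φ_b`. -/
def IsPlanarStationary (γ R Tinf m uinf φb : ℝ) (n u T φ : ℝ → ℝ) : Prop :=
  ContinuousOn n (Set.Ici 0) ∧ ContinuousOn u (Set.Ici 0) ∧
  ContinuousOn T (Set.Ici 0) ∧ ContinuousOn φ (Set.Ici 0) ∧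
  (∃ ε > 0, ∀ x ∈ Set.Ici (0 : ℝ), ε ≤ n x) ∧
  (∃ ε > 0, ∀ x ∈ Set.Ici (0 : ℝ), ε ≤ T x) ∧
  Filter.Tendsto n Filter.atTop (nhds 1) ∧
  Filter.Tendsto u Filter.atTop (nhds uinf) ∧
  Filter.Tendsto T Filter.atTop (nhds Tinf) ∧
  Filter.Tendsto φ Filter.atTop (nhds 0) ∧
  φ 0 = φb ∧
  ∃ n' u' T' φd φd' : ℝ → ℝ,
    (∀ x ∈ Set.Ioi (0 : ℝ), HasDerivAt n (n' x) x) ∧ ContinuousOn n' (Set.Ioi 0) ∧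
    (∀ x ∈ Set.Ioi (0 : ℝ), HasDerivAt u (u' x) x) ∧ ContinuousOn u' (Set.Ioi 0) ∧
    (∀ x ∈ Set.Ioi (0 : ℝ), HasDerivAt T (T' x) x) ∧ ContinuousOn T' (Set.Ioi 0) ∧
    (∀ x ∈ Set.Ioi (0 : ℝ), HasDerivAt φ (φd x) x) ∧ ContinuousOn φd (Set.Ioi 0) ∧
    (∀ x ∈ Set.Ioi (0 : ℝ), HasDerivAt φd (φd' x) x) ∧ ContinuousOn φd' (Set.Ioi 0) ∧
    (∀ x ∈ Set.Ioi (0 : ℝ), n' x * u x + n x * u' x = 0) ∧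
    (∀ x ∈ Set.Ioi (0 : ℝ),
      m * n x * u x * u' x + R * (T' x * n x + T x * n' x) = n x * φd x) ∧
    (∀ x ∈ Set.Ioi (0 : ℝ), u x * T' x + (γ - 1) * T x * u' x = 0) ∧
    (∀ x ∈ Set.Ioi (0 : ℝ), φd' x = n x - Real.exp (-φ x))

open Filter Set Topology

section Calculus

theorem exists_eq_const_of_hasDerivAt_zero {E : Type*} [NormedAddCommGroup E] [NormedSpace ℝ E]
    {f : ℝ → E} {a : ℝ} (hf : ∀ x ∈ Ioi a, HasDerivAt f 0 x) : ∃ c, ∀ x ∈ Ioi a, f x = c :=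
  isOpen_Ioi.exists_is_const_of_deriv_eq_zero isPreconnected_Ioi
    (fun x hx => (hf x hx).differentiableAt.differentiableWithinAt) fun x hx => (hf x hx).deriv

theorem eq_lim_of_hasDerivAt_zero {E : Type*} [NormedAddCommGroup E] [NormedSpace ℝ E]
    {f : ℝ → E} {a : ℝ} {l : E} (hf : ∀ x ∈ Ioi a, HasDerivAt f 0 x)
    (hl : Tendsto f atTop (𝓝 l)) : ∀ x ∈ Ioi a, f x = l := by
  obtain ⟨c, hc⟩ := exists_eq_const_of_hasDerivAt_zero hf
  have hcl : Tendsto f atTop (𝓝 c) :=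
    tendsto_const_nhds.congr' <| (eventually_gt_atTop a).mono fun x hx => (hc x hx).symm
  intro x hx
  rw [hc x hx, tendsto_nhds_unique hcl hl]

theorem eq_const_on_Ici_of_Ioi {X : Type*} [TopologicalSpace X] [T2Space X] {f : ℝ → X} {a : ℝ}
    {c : X} (hf : ContinuousOn f (Ici a)) (hc : ∀ x ∈ Ioi a, f x = c) : ∀ x ∈ Ici a, f x = c :=
  EqOn.of_subset_closure (g := fun _ => c) hc hf continuousOn_const Ioi_subset_Ici_self
    (closure_Ioi a).ge

theorem mapClusterPt_zero_of_tendsto_of_hasDerivAt {f f' : ℝ → ℝ} {l : ℝ}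
    (hf : ∀ᶠ x in atTop, HasDerivAt f (f' x) x) (hl : Tendsto f atTop (𝓝 l)) :
    MapClusterPt 0 atTop f' := by
  have hincr : Tendsto (fun x => f (x + 1) - f x) atTop (𝓝 0) := by
    simpa using (hl.comp (tendsto_atTop_add_const_right _ 1 tendsto_id)).sub hl
  refine mapClusterPt_iff_frequently.2 fun s hs => frequently_atTop.2 fun b => ?_
  obtain ⟨x, hxs, hfx, hbx⟩ :=
    ((hincr.eventually_mem hs).and
      ((eventually_forall_ge_atTop.2 hf).and (eventually_ge_atTop b))).exists
  obtain ⟨ξ, hξ, hslope⟩ := exists_hasDerivAt_eq_slope f f' (lt_add_one x)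
    (fun y hy => (hfx y hy.1).continuousAt.continuousWithinAt) fun y hy => hfx y hy.1.le
  refine ⟨ξ, hbx.trans hξ.1.le, ?_⟩
  simpa [hslope] using hxs

theorem half_sq_deriv_eq_sub_lim {f f' f'' W : ℝ → ℝ} {a l w : ℝ}
    (hf : ∀ x ∈ Ioi a, HasDerivAt f (f' x) x) (hf' : ∀ x ∈ Ioi a, HasDerivAt f' (f'' x) x)
    (hW : ∀ x ∈ Ioi a, HasDerivAt W (f' x * f'' x) x)
    (hl : Tendsto f atTop (𝓝 l)) (hw : Tendsto W atTop (𝓝 w)) :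
    ∀ x ∈ Ioi a, f' x ^ 2 / 2 = W x - w := by
  have henergy : ∀ x ∈ Ioi a, HasDerivAt (fun y => f' y ^ 2 / 2 - W y) 0 x := fun x hx =>
    ((((hf' x hx).pow 2).div_const 2).sub (hW x hx)).congr_deriv (by push_cast; ring)
  obtain ⟨C, hC⟩ := exists_eq_const_of_hasDerivAt_zero henergy
  have hkinetic : Tendsto (fun x => f' x ^ 2 / 2) atTop (𝓝 (C + w)) :=
    (tendsto_const_nhds.add hw).congr' <| (eventually_gt_atTop a).mono fun x hx => by
      rw [← hC x hx]; ring
  have hcluster : MapClusterPt ((0 : ℝ) ^ 2 / 2) atTop fun x => f' x ^ 2 / 2 :=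
    (mapClusterPt_zero_of_tendsto_of_hasDerivAt ((eventually_gt_atTop a).mono hf)
      hl).continuousAt_comp (f := fun y : ℝ => y ^ 2 / 2) (by fun_prop)
  have hCw : (0 : ℝ) ^ 2 / 2 = C + w := eq_of_nhds_neBot (hcluster.clusterPt.mono hkinetic)
  intro x hx
  linarith [hC x hx]

theorem eventually_lt_of_hasDerivAt_of_neg {f f' : ℝ → ℝ} {a d : ℝ}
    (hf : ∀ᶠ x in 𝓝 a, HasDerivAt f (f' x) x) (ha : f' a = 0) (hf' : HasDerivAt f' d a)
    (hd : d < 0) : ∀ᶠ x in 𝓝[≠] a, f x < f a := by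
  -- Subtracting half of the quadratic Taylor term still leaves a local maximum at `a`.
  set g : ℝ → ℝ := fun x => f x - d / 4 * (x - a) ^ 2 with hg
  set g' : ℝ → ℝ := fun x => f' x - d / 2 * (x - a) with hg'
  have hgd : ∀ᶠ x in 𝓝 a, HasDerivAt g (g' x) x := hf.mono fun x hx =>
    (hx.sub ((((hasDerivAt_id x).sub_const a).pow 2).const_mul (d / 4))).congr_deriv (by
      simp only [hg', id]; push_cast; ring)
  have hg'd : HasDerivAt g' (d / 2) a :=
    (hf'.sub (((hasDerivAt_id a).sub_const a).const_mul (d / 2))).congr_deriv (by ring)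
  have hderiv : deriv g =ᶠ[𝓝 a] g' := hgd.mono fun x hx => hx.deriv
  have hmax : IsLocalMax g a := isLocalMax_of_deriv_deriv_neg
    (by rw [hderiv.deriv_eq, hg'd.deriv]; linarith) (by simp [hderiv.eq_of_nhds, hg', ha])
    hgd.self_of_nhds.continuousAt
  filter_upwards [hmax.filter_mono nhdsWithin_le_nhds, self_mem_nhdsWithin] with x hx hxa
  have hsq : 0 < (x - a) ^ 2 := sq_pos_of_ne_zero (sub_ne_zero.2 hxa)
  simp only [hg, sub_self] at hx
  nlinarith

theorem eq_const_of_isPreconnected_of_not_accPt_image {X Y : Type*} [TopologicalSpace X]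
    [TopologicalSpace Y] [T1Space Y] {f : X → Y} {s : Set X} {c : Y} (hs : IsPreconnected s)
    (hf : ContinuousOn f s) (hc : c ∈ closure (f '' s)) (hacc : ¬ AccPt c (𝓟 (f '' s))) :
    ∀ x ∈ s, f x = c := by
  have hcs : c ∈ f '' s :=
    (clusterPt_principal.1 (mem_closure_iff_clusterPt.1 hc)).resolve_right hacc
  intro x hx
  by_contra hne
  exact hacc ((hs.image f hf).preperfect_of_nontrivial
    ⟨f x, mem_image_of_mem f hx, c, hcs, hne⟩ c hcs)

theorem mul_rpow_neg_eq_lim {n n' T T' : ℝ → ℝ} {a κ ν Θ : ℝ}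
    (hpos : ∀ x ∈ Ioi a, 0 < n x) (hn : ∀ x ∈ Ioi a, HasDerivAt n (n' x) x)
    (hT : ∀ x ∈ Ioi a, HasDerivAt T (T' x) x)
    (hnT : ∀ x ∈ Ioi a, n x * T' x = κ * T x * n' x) (hν : ν ≠ 0)
    (hnlim : Tendsto n atTop (𝓝 ν)) (hTlim : Tendsto T atTop (𝓝 Θ)) :
    ∀ x ∈ Ioi a, T x * n x ^ (-κ) = Θ * ν ^ (-κ) := by
  refine eq_lim_of_hasDerivAt_zero (fun x hx => ?_) (hTlim.mul (hnlim.rpow_const (Or.inl hν)))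
  have hne := (hpos x hx).ne'
  refine ((hT x hx).mul ((hn x hx).rpow_const (p := -κ) (Or.inl hne))).congr_deriv ?_
  have hpow : n x ^ (-κ) = n x ^ (-κ - 1) * n x := by
    rw [← Real.rpow_add_one hne, sub_add_cancel]
  rw [hpow]
  linear_combination n x ^ (-κ - 1) * hnT x hx

end Calculus

section BarotropicSheath

/-- The specific enthalpy of a fluid whose momentum flux at density `s` is `P s`, normalised to
vanish at the far-field density `1`. -/
noncomputable def enthalpy (P : ℝ → ℝ) (s : ℝ) : ℝ := ∫ t in (1 : ℝ)..s, deriv P t / t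

/-- The Sagdeev potential of the sheath, up to sign and an additive constant, as a function of the
density `s`; the exponential is the Boltzmann electron pressure at potential `enthalpy P s`. -/
noncomputable def sagdeev (P : ℝ → ℝ) (s : ℝ) : ℝ := P s + Real.exp (-enthalpy P s)

/-- The sheath problem on `(a, ∞)` for a barotropic fluid with momentum flux `P`: the density `n`
and the potential `φ`, with derivatives `n'` and `φ'`, satisfy momentum balance and the Poisson
equation and tend to `1` and `0`. -/
structure IsBarotropicSheath (P n n' φ φ' : ℝ → ℝ) (a : ℝ) : Prop where
  density_pos : ∀ x ∈ Ioi a, 0 < n x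
  hasDerivAt_density : ∀ x ∈ Ioi a, HasDerivAt n (n' x) x
  hasDerivAt_potential : ∀ x ∈ Ioi a, HasDerivAt φ (φ' x) x
  momentum : ∀ x ∈ Ioi a, n x * φ' x = deriv P (n x) * n' x
  poisson : ∀ x ∈ Ioi a, HasDerivAt φ' (n x - Real.exp (-φ x)) x
  tendsto_density : Tendsto n atTop (𝓝 1)
  tendsto_potential : Tendsto φ atTop (𝓝 0)

variable {P n n' φ φ' : ℝ → ℝ} {a s : ℝ}

theorem enthalpy_one : enthalpy P 1 = 0 := intervalIntegral.integral_same

theorem hasDerivAt_enthalpy (hP : ContDiffOn ℝ 1 P (Ioi 0)) (hs : 0 < s) :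
    HasDerivAt (enthalpy P) (deriv P s / s) s := by
  have hcont : ContinuousOn (fun t => deriv P t / t) (Ioi 0) :=
    (hP.continuousOn_deriv_of_isOpen isOpen_Ioi le_rfl).div continuousOn_id fun t ht => ht.ne'
  have hsub : uIcc 1 s ⊆ Ioi 0 := ordConnected_Ioi.uIcc_subset (mem_Ioi.2 one_pos) hs
  exact intervalIntegral.integral_hasDerivAt_right (hcont.mono hsub).intervalIntegrable
    (hcont.stronglyMeasurableAtFilter isOpen_Ioi s hs) (hcont.continuousAt (Ioi_mem_nhds hs))

theorem hasDerivAt_sagdeev (hP : ContDiffOn ℝ 1 P (Ioi 0)) (hs : 0 < s) :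
    HasDerivAt (sagdeev P) (deriv P s / s * (s - Real.exp (-enthalpy P s))) s := by
  have hPs : HasDerivAt P (deriv P s) s :=
    ((hP.differentiableOn one_ne_zero).differentiableAt (Ioi_mem_nhds hs)).hasDerivAt
  refine (hPs.add (hasDerivAt_enthalpy hP hs).neg.exp).congr_deriv ?_
  simp only [Pi.neg_apply]
  field_simp
  ring

theorem sagdeev_lt_sagdeev_one (hP : ContDiffOn ℝ 2 P (Ioi 0)) (hlower : -1 < deriv P 1)
    (hupper : deriv P 1 < 0) : ∀ᶠ s in 𝓝[≠] 1, sagdeev P s < sagdeev P 1 := by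
  have hP₁ : ContDiffOn ℝ 1 P (Ioi 0) := hP.of_le one_le_two
  have hderiv : ∀ᶠ s in 𝓝 1, HasDerivAt (sagdeev P)
      (deriv P s / s * (s - Real.exp (-enthalpy P s))) s :=
    (lt_mem_nhds one_pos).mono fun s hs => hasDerivAt_sagdeev hP₁ hs
  have hP' : HasDerivAt (deriv P) (deriv (deriv P) 1) 1 :=
    (((hP.deriv_of_isOpen (m := 1) isOpen_Ioi one_add_one_eq_two.le).differentiableOn
      one_ne_zero).differentiableAt (Ioi_mem_nhds one_pos)).hasDerivAt
  have hderiv₂ : HasDerivAt (fun s => deriv P s / s * (s - Real.exp (-enthalpy P s)))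
      (deriv P 1 * (1 + deriv P 1)) 1 := by
    refine ((hP'.div (hasDerivAt_id 1) one_ne_zero).mul ((hasDerivAt_id 1).sub
      (hasDerivAt_enthalpy hP₁ one_pos).neg.exp)).congr_deriv ?_
    simp [enthalpy_one]
  exact eventually_lt_of_hasDerivAt_of_neg hderiv (by simp [enthalpy_one]) hderiv₂
    (mul_neg_of_neg_of_pos hupper (by linarith))

namespace IsBarotropicSheath

theorem potential_eq_enthalpy (h : IsBarotropicSheath P n n' φ φ' a)
    (hP : ContDiffOn ℝ 1 P (Ioi 0)) : ∀ x ∈ Ioi a, φ x = enthalpy P (n x) := by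
  have hlim : Tendsto (fun x => φ x - enthalpy P (n x)) atTop (𝓝 0) := by
    simpa [enthalpy_one] using h.tendsto_potential.sub
      ((hasDerivAt_enthalpy hP one_pos).continuousAt.tendsto.comp h.tendsto_density)
  refine fun x hx => sub_eq_zero.1 (eq_lim_of_hasDerivAt_zero (fun y hy => ?_) hlim x hx)
  have hne := (h.density_pos y hy).ne'
  refine ((h.hasDerivAt_potential y hy).sub ((hasDerivAt_enthalpy hP (h.density_pos y hy)).comp y
    (h.hasDerivAt_density y hy))).congr_deriv ?_
  field_simp
  linear_combination h.momentum y hy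

theorem half_sq_field_eq (h : IsBarotropicSheath P n n' φ φ' a)
    (hP : ContDiffOn ℝ 1 P (Ioi 0)) :
    ∀ x ∈ Ioi a, φ' x ^ 2 / 2 = sagdeev P (n x) - sagdeev P 1 := by
  refine half_sq_deriv_eq_sub_lim (W := sagdeev P ∘ n) h.hasDerivAt_potential h.poisson
    (fun x hx => ?_) h.tendsto_potential
    ((hasDerivAt_sagdeev hP one_pos).continuousAt.tendsto.comp h.tendsto_density)
  have hne := (h.density_pos x hx).ne'
  refine ((hasDerivAt_sagdeev hP (h.density_pos x hx)).comp x
    (h.hasDerivAt_density x hx)).congr_deriv ?_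
  rw [h.potential_eq_enthalpy hP x hx]
  field_simp
  linear_combination -(n x - Real.exp (-enthalpy P (n x))) * h.momentum x hx

theorem density_eq_one (h : IsBarotropicSheath P n n' φ φ' a) (hP : ContDiffOn ℝ 2 P (Ioi 0))
    (hlower : -1 < deriv P 1) (hupper : deriv P 1 < 0) : ∀ x ∈ Ioi a, n x = 1 := by
  refine eq_const_of_isPreconnected_of_not_accPt_image isPreconnected_Ioi
    (fun x hx => (h.hasDerivAt_density x hx).continuousAt.continuousWithinAt)
    (mem_closure_of_tendsto h.tendsto_density <|
      (eventually_gt_atTop a).mono fun x hx => mem_image_of_mem n hx) ?_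
  rw [accPt_iff_frequently_nhdsNE, not_frequently]
  filter_upwards [sagdeev_lt_sagdeev_one hP hlower hupper]
  rintro _ hlt ⟨x, hx, rfl⟩
  linarith [h.half_sq_field_eq (hP.of_le one_le_two) x hx, sq_nonneg (φ' x)]

theorem potential_eq_zero (h : IsBarotropicSheath P n n' φ φ' a) (hP : ContDiffOn ℝ 2 P (Ioi 0))
    (hlower : -1 < deriv P 1) (hupper : deriv P 1 < 0) : ∀ x ∈ Ioi a, φ x = 0 := fun x hx => by
  rw [h.potential_eq_enthalpy (hP.of_le one_le_two) x hx, h.density_eq_one hP hlower hupper x hx,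
    enthalpy_one]

end IsBarotropicSheath

end BarotropicSheath

section AdiabaticFlow

/-- The momentum flux of an adiabatic flow of density `s`: with far-field density `1`, kinetic
flux `p` and pressure `q`, mass conservation gives the kinetic part `p / s` and the adiabatic law
the pressure `q * s ^ γ`. -/
noncomputable def adiabaticFlux (γ p q s : ℝ) : ℝ := p / s + q * s ^ γ

variable {γ p q s : ℝ}

theorem hasDerivAt_adiabaticFlux (hs : s ≠ 0) :
    HasDerivAt (adiabaticFlux γ p q) (-p / s ^ 2 + q * (γ * s ^ (γ - 1))) s :=
  (((hasDerivAt_const s p).div (hasDerivAt_id s) hs).add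
    ((Real.hasDerivAt_rpow_const (Or.inl hs)).const_mul q)).congr_deriv (by simp)

theorem deriv_adiabaticFlux_one : deriv (adiabaticFlux γ p q) 1 = γ * q - p := by
  rw [(hasDerivAt_adiabaticFlux one_ne_zero).deriv, Real.one_rpow]
  ring

theorem contDiffOn_adiabaticFlux {k : WithTop ℕ∞} :
    ContDiffOn ℝ k (adiabaticFlux γ p q) (Ioi 0) := fun _ hs =>
  ((contDiffAt_const.div contDiffAt_id hs.ne').add
    (contDiffAt_const.mul (Real.contDiffAt_rpow_const_of_ne hs.ne'))).contDiffWithinAt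

end AdiabaticFlow

namespace IsPlanarStationary

variable {γ R Tinf m uinf φb : ℝ} {n u T φ : ℝ → ℝ}

theorem density_pos (h : IsPlanarStationary γ R Tinf m uinf φb n u T φ) :
    ∀ x ∈ Ioi 0, 0 < n x := by
  obtain ⟨-, -, -, -, ⟨ε, hε, hn⟩, -⟩ := h
  exact fun x hx => hε.trans_le (hn x (mem_Ici_of_Ioi hx))

theorem density_mul_velocity (h : IsPlanarStationary γ R Tinf m uinf φb n u T φ) :
    ∀ x ∈ Ioi 0, n x * u x = uinf := by
  obtain ⟨-, -, -, -, -, -, hnlim, hulim, -, -, -, n', u', -, -, -, hn, -, hu', -, -, -, -, -, -, -,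
    hmass, -⟩ := h
  exact eq_lim_of_hasDerivAt_zero
    (fun x hx => ((hn x hx).mul (hu' x hx)).congr_deriv (hmass x hx))
    (by simpa using hnlim.mul hulim)

theorem temperature_eq (h : IsPlanarStationary γ R Tinf m uinf φb n u T φ) (hu : uinf ≠ 0) :
    ∀ x ∈ Ioi 0, T x = Tinf * n x ^ (γ - 1) := by
  have hpos := h.density_pos
  have hflux := h.density_mul_velocity
  obtain ⟨-, -, -, -, -, -, hnlim, -, hTlim, -, -, n', u', T', -, -, hn, -, -, -, hT, -, -, -, -, -,
    hmass, -, hheat, -⟩ := h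
  have hadiabatic : ∀ x ∈ Ioi 0, n x * T' x = (γ - 1) * T x * n' x := fun x hx => by
    have hux : u x ≠ 0 := right_ne_zero_of_mul (hflux x hx ▸ hu)
    apply mul_left_cancel₀ hux
    linear_combination n x * hheat x hx - (γ - 1) * T x * hmass x hx
  intro x hx
  have hconst := mul_rpow_neg_eq_lim hpos hn hT hadiabatic one_ne_zero hnlim hTlim x hx
  rw [Real.one_rpow, mul_one] at hconst
  rw [← hconst, mul_assoc, ← Real.rpow_add (hpos x hx), neg_add_cancel, Real.rpow_zero, mul_one]

theorem momentumFlux_eq (h : IsPlanarStationary γ R Tinf m uinf φb n u T φ) (hu : uinf ≠ 0) :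
    ∀ x ∈ Ioi 0,
      m * uinf * u x + R * (T x * n x) = adiabaticFlux γ (m * uinf ^ 2) (R * Tinf) (n x) := by
  intro x hx
  have hne := (h.density_pos x hx).ne'
  have hvel : u x = uinf / n x := eq_div_of_mul_eq hne (by
    rw [mul_comm, h.density_mul_velocity x hx])
  have hpow : n x ^ γ = n x ^ (γ - 1) * n x := by
    rw [← Real.rpow_add_one hne, sub_add_cancel]
  rw [adiabaticFlux, h.temperature_eq hu x hx, hvel, hpow]
  ring

theorem exists_isBarotropicSheath (h : IsPlanarStationary γ R Tinf m uinf φb n u T φ)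
    (hu : uinf ≠ 0) :
    ∃ n' φ', IsBarotropicSheath (adiabaticFlux γ (m * uinf ^ 2) (R * Tinf)) n n' φ φ' 0 := by
  have hpos := h.density_pos
  have hflux := h.density_mul_velocity
  have hmomentumFlux := h.momentumFlux_eq hu
  obtain ⟨-, -, -, -, -, -, hnlim, -, -, hφlim, -, n', u', T', φ', φ'', hn, -, hu', -, hT, -,
    hφ, -, hφ', -, -, hmom, -, hpoisson⟩ := h
  refine ⟨n', φ', hpos, hn, hφ, fun x hx => ?_, fun x hx => hpoisson x hx ▸ hφ' x hx, hnlim, hφlim⟩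
  have hP : HasDerivAt (fun y => m * uinf * u y + R * (T y * n y))
      (deriv (adiabaticFlux γ (m * uinf ^ 2) (R * Tinf)) (n x) * n' x) x :=
    ((hasDerivAt_adiabaticFlux (hpos x hx).ne').differentiableAt.hasDerivAt.comp x
      (hn x hx)).congr_of_eventuallyEq (eventually_of_mem (Ioi_mem_nhds hx) hmomentumFlux)
  have hφn : HasDerivAt (fun y => m * uinf * u y + R * (T y * n y)) (n x * φ' x) x :=
    (((hu' x hx).const_mul (m * uinf)).add (((hT x hx).mul (hn x hx)).const_mul R)).congr_deriv (by
      linear_combination hmom x hx - m * u' x * hflux x hx)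
  exact hφn.unique hP

theorem eq_const_on_Ioi (h : IsPlanarStationary γ R Tinf m uinf φb n u T φ) (hu : uinf ≠ 0)
    (h1 : γ * R * Tinf < m * uinf ^ 2) (h2 : m * uinf ^ 2 < γ * R * Tinf + 1) :
    ∀ x ∈ Ioi 0, n x = 1 ∧ u x = uinf ∧ T x = Tinf ∧ φ x = 0 := by
  obtain ⟨n', φ', hsheath⟩ := h.exists_isBarotropicSheath hu
  have hlower : -1 < deriv (adiabaticFlux γ (m * uinf ^ 2) (R * Tinf)) 1 := by
    rw [deriv_adiabaticFlux_one]; linarith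
  have hupper : deriv (adiabaticFlux γ (m * uinf ^ 2) (R * Tinf)) 1 < 0 := by
    rw [deriv_adiabaticFlux_one]; linarith
  intro x hx
  have hn : n x = 1 := hsheath.density_eq_one contDiffOn_adiabaticFlux hlower hupper x hx
  exact ⟨hn, by simpa [hn] using h.density_mul_velocity x hx,
    by simpa [hn] using h.temperature_eq hu x hx,
    hsheath.potential_eq_zero contDiffOn_adiabaticFlux hlower hupper x hx⟩

end IsPlanarStationary

theorem forbidden_range_no_nontrivial_solution_general {γ R Tinf m uinf φb : ℝ}
    {n u T φ : ℝ → ℝ} (hu : uinf ≠ 0) (h1 : γ * R * Tinf < m * uinf ^ 2)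
    (h2 : m * uinf ^ 2 < γ * R * Tinf + 1)
    (h : IsPlanarStationary γ R Tinf m uinf φb n u T φ) :
    φb = 0 ∧ ∀ x ∈ Ici 0, n x = 1 ∧ u x = uinf ∧ T x = Tinf ∧ φ x = 0 := by
  have hconst := h.eq_const_on_Ioi hu h1 h2
  obtain ⟨hn_cont, hu_cont, hT_cont, hφ_cont, -, -, -, -, -, -, hφ0, -⟩ := h
  have hφ_zero := eq_const_on_Ici_of_Ioi hφ_cont fun x hx => (hconst x hx).2.2.2
  exact ⟨hφ0.symm.trans (hφ_zero 0 self_mem_Ici), fun x hx =>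
    ⟨eq_const_on_Ici_of_Ioi hn_cont (fun y hy => (hconst y hy).1) x hx,
      eq_const_on_Ici_of_Ioi hu_cont (fun y hy => (hconst y hy).2.1) x hx,
      eq_const_on_Ici_of_Ioi hT_cont (fun y hy => (hconst y hy).2.2.1) x hx, hφ_zero x hx⟩⟩

/-- In the forbidden velocity range `γRT∞ < m u∞² < γRT∞ + 1`: (i) if `φ_b ≠ 0` the
planar stationary problem has no solution; (ii) if `φ_b = 0` every solution is the
constant state `(1, u∞, T∞, 0)`. -/
theorem forbidden_range_no_nontrivial_solution
    (γ R Tinf m uinf φb : ℝ)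
    (hγ : 1 < γ) (hR : 0 < R) (hT : 0 < Tinf) (hm : 0 < m) (hu : uinf < 0)
    (h1 : γ * R * Tinf < m * uinf ^ 2) (h2 : m * uinf ^ 2 < γ * R * Tinf + 1) :
    (φb ≠ 0 →
      ¬ ∃ n u T φ : ℝ → ℝ, IsPlanarStationary γ R Tinf m uinf φb n u T φ) ∧
    (φb = 0 →
      ∀ n u T φ : ℝ → ℝ, IsPlanarStationary γ R Tinf m uinf φb n u T φ →
        ∀ x ∈ Set.Ici (0 : ℝ), n x = 1 ∧ u x = uinf ∧ T x = Tinf ∧ φ x = 0) :=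
  ⟨fun hφb ⟨_, _, _, _, h⟩ =>
    hφb (forbidden_range_no_nontrivial_solution_general hu.ne h1 h2 h).1,
    fun _ _ _ _ _ h => (forbidden_range_no_nontrivial_solution_general hu.ne h1 h2 h).2⟩
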